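/- For every finite simple graph G, Max(G) - 1 ≤ Min(G) and 2·Min(G) ≤ 3·μ(G), i.e., Min(G) ≤ (3/2)·μ(G). -/

import Mathlib

/-!
Write `M s` and `m s` for the value of the game on the subgraph induced by `s` when Max,
respectively Min, moves first.

The key fact is that both values are monotone in `s` (`gameValue_mono`), proved for `M` and `m`
together by induction on the larger set. For `M`, an optimal first move in the smaller set is
also available in the larger one. For `m`, let `vw` be an optimal first move of Min in the larger
set `s`; on the smaller set `t`, either Min can move so as to delete all of `t ∩ {v, w}`, or the
part of `{v, w}` in `t` is isolated in `t` and can be discarded for free.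
Given monotonicity, Max's optimal first move `e` yields `M s = 1 + m (s \ e) ≤ 1 + m s`.

For the bound by `μ`, Min plays edges of a fixed maximal matching as long as some of them are
intact. The invariant (`gameValue_le_of_cover`) is that the remaining edges are covered by the
endpoints of a set `A` of intact matching edges together with a set `B` of single vertices; then
`2 m s ≤ 3 |A| + 2 |B|` and `2 M s ≤ 3 |A| + 2 |B| + 1`. Initially `A` is the maximal matching and
`B = ∅`.
-/

open Finset

variable {V : Type*} [DecidableEq V]

/-- The legal moves in the matching game on `G` when the set of remaining
(undeleted) vertices is `s`: ordered pairs of adjacent remaining vertices. -/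
def matchPlays (G : SimpleGraph V) [DecidableRel G.Adj] (s : Finset V) :
    Finset (V × V) :=
  (s ×ˢ s).filter fun p => G.Adj p.1 p.2

lemma matchPlays_card {G : SimpleGraph V} [DecidableRel G.Adj] {s : Finset V}
    {p : V × V} (hp : p ∈ matchPlays G s) :
    (s \ {p.1, p.2}).card < s.card := by
  simp only [matchPlays, mem_filter, mem_product] at hp
  refine card_lt_card (Finset.sdiff_ssubset ?_ ⟨p.1, mem_insert_self _ _⟩)
  intro x hx
  rcases mem_insert.mp hx with h | h
  · exact h ▸ hp.1.1
  · exact (mem_singleton.mp h) ▸ hp.1.2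

/-- The value of the matching game on the subgraph of `G` induced by the vertex
set `s`, with Max to move if `maxTurn = true` and Min to move otherwise:
the number of *further* edges added to the matching under optimal play. -/
def gameValue (G : SimpleGraph V) [DecidableRel G.Adj] (maxTurn : Bool)
    (s : Finset V) : ℕ :=
  if h : (matchPlays G s).Nonempty then
    if maxTurn then
      (matchPlays G s).attach.sup
        fun p => 1 + gameValue G false (s \ {p.1.1, p.1.2})
    else
      (matchPlays G s).attach.inf' (by simpa using h)
        fun p => 1 + gameValue G true (s \ {p.1.1, p.1.2})
  else 0
termination_by s.card
decreasing_by
  · exact matchPlays_card p.2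
  · exact matchPlays_card p.2

/-- The Max-start game matching number `Max(G)`. -/
noncomputable def gameMax [Fintype V] (G : SimpleGraph V) : ℕ :=
  letI : DecidableRel G.Adj := Classical.decRel _
  gameValue G true Finset.univ

/-- The Min-start game matching number `Min(G)`. -/
noncomputable def gameMin [Fintype V] (G : SimpleGraph V) : ℕ :=
  letI : DecidableRel G.Adj := Classical.decRel _
  gameValue G false Finset.univ

/-- `M` is a matching in `G`: a set of edges of `G` that are pairwise
vertex-disjoint. -/
def IsMatchingSet (G : SimpleGraph V) (M : Finset (Sym2 V)) : Prop :=
  (∀ e ∈ M, e ∈ G.edgeSet) ∧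
    ∀ e ∈ M, ∀ f ∈ M, e ≠ f → ∀ v : V, v ∈ e → v ∉ f

/-- The matching number `α'(G)`: the maximum size of a matching in `G`. -/
noncomputable def matchingNumber (G : SimpleGraph V) : ℕ :=
  sSup {n | ∃ M : Finset (Sym2 V), IsMatchingSet G M ∧ M.card = n}

/-- `M` is a maximal matching in `G`: a matching to which no edge of `G` can
be added. -/
def IsMaximalMatchingSet {V : Type*} [DecidableEq V] (G : SimpleGraph V)
    (M : Finset (Sym2 V)) : Prop :=
  IsMatchingSet G M ∧ ∀ e ∈ G.edgeSet, e ∉ M → ¬ IsMatchingSet G (insert e M)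

/-- `μ(G)`: the minimum size of a maximal matching in `G`. -/
noncomputable def minMaximalMatching {V : Type*} [DecidableEq V]
    (G : SimpleGraph V) : ℕ :=
  sInf {n | ∃ M : Finset (Sym2 V), IsMaximalMatchingSet G M ∧ M.card = n}

section Game

variable (G : SimpleGraph V) [DecidableRel G.Adj]

/-! ### Optimal moves -/

lemma mem_matchPlays {s : Finset V} {p : V × V} :
    p ∈ matchPlays G s ↔ p.1 ∈ s ∧ p.2 ∈ s ∧ G.Adj p.1 p.2 := by
  simp [matchPlays, and_assoc]

lemma gameValue_eq_zero (b : Bool) {s : Finset V}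
    (h : ∀ x ∈ s, ∀ y ∈ s, ¬ G.Adj x y) : gameValue G b s = 0 := by
  rw [gameValue, dif_neg]
  rintro ⟨p, hp⟩
  rw [mem_matchPlays] at hp
  exact h _ hp.1 _ hp.2.1 hp.2.2

lemma gameValue_false_le {s : Finset V} {x y : V} (hx : x ∈ s) (hy : y ∈ s) (h : G.Adj x y) :
    gameValue G false s ≤ 1 + gameValue G true (s \ {x, y}) := by
  have hp : (x, y) ∈ matchPlays G s := (mem_matchPlays G).2 ⟨hx, hy, h⟩
  rw [gameValue, dif_pos ⟨_, hp⟩]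
  exact Finset.inf'_le (fun p : {p // p ∈ matchPlays G s} =>
    1 + gameValue G true (s \ {p.1.1, p.1.2})) (Finset.mem_attach _ ⟨(x, y), hp⟩)

lemma le_gameValue_true {s : Finset V} {x y : V} (hx : x ∈ s) (hy : y ∈ s) (h : G.Adj x y) :
    1 + gameValue G false (s \ {x, y}) ≤ gameValue G true s := by
  have hp : (x, y) ∈ matchPlays G s := (mem_matchPlays G).2 ⟨hx, hy, h⟩
  rw [gameValue.eq_def G true s, dif_pos ⟨_, hp⟩]
  exact Finset.le_sup (f := fun p : {p // p ∈ matchPlays G s} =>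
    1 + gameValue G false (s \ {p.1.1, p.1.2})) (Finset.mem_attach _ ⟨(x, y), hp⟩)

/-- Either no move is left, or the player to move has an optimal one. -/
lemma gameValue_cases (b : Bool) (s : Finset V) :
    (∀ x ∈ s, ∀ y ∈ s, ¬ G.Adj x y) ∨
      ∃ x ∈ s, ∃ y ∈ s, G.Adj x y ∧ gameValue G b s = 1 + gameValue G (!b) (s \ {x, y}) := by
  by_cases h : (matchPlays G s).Nonempty
  · right
    have h' : (matchPlays G s).attach.Nonempty := by simpa using h
    rw [gameValue.eq_def G b s, dif_pos h]
    cases b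
    · obtain ⟨p, -, hp⟩ := Finset.exists_mem_eq_inf' h' (fun p : {p // p ∈ matchPlays G s} =>
        1 + gameValue G true (s \ {p.1.1, p.1.2}))
      have := (mem_matchPlays G).1 p.2
      exact ⟨_, this.1, _, this.2.1, this.2.2, hp⟩
    · obtain ⟨p, -, hp⟩ := Finset.exists_mem_eq_sup _ h' (fun p : {p // p ∈ matchPlays G s} =>
        1 + gameValue G false (s \ {p.1.1, p.1.2}))
      have := (mem_matchPlays G).1 p.2
      exact ⟨_, this.1, _, this.2.1, this.2.2, hp⟩
  · left
    intro x hx y hy hxy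
    exact h ⟨(x, y), (mem_matchPlays G).2 ⟨hx, hy, hxy⟩⟩

lemma card_sdiff_pair_lt {s : Finset V} {x : V} (hx : x ∈ s) (y : V) :
    (s \ {x, y}).card < s.card :=
  Finset.card_lt_card ((Finset.ssubset_iff_of_subset Finset.sdiff_subset).2 ⟨x, hx, by simp⟩)

/-! ### Monotonicity of the game values -/

/-- Isolated vertices do not affect the game. -/
lemma gameValue_erase_isolated (n : ℕ) : ∀ (b : Bool) (s : Finset V) (w : V), s.card ≤ n →
    (∀ x ∈ s, ¬ G.Adj w x) → gameValue G b s = gameValue G b (s.erase w) := by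
  induction n with
  | zero =>
    intro b s w hs _
    have : s = ∅ := by simpa using hs
    simp [this]
  | succ n ih =>
    intro b s w hs hw
    have key : ∀ x ∈ s, ∀ y ∈ s, G.Adj x y → x ∈ s.erase w ∧ y ∈ s.erase w ∧
        gameValue G (!b) (s \ {x, y}) = gameValue G (!b) (s.erase w \ {x, y}) := by
      intro x hx y hy hxy
      refine ⟨Finset.mem_erase.2 ⟨?_, hx⟩, Finset.mem_erase.2 ⟨?_, hy⟩, ?_⟩
      · rintro rfl; exact hw y hy hxy
      · rintro rfl; exact hw x hx hxy.symm
      · have := card_sdiff_pair_lt hx y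
        rw [ih _ _ w (by omega) (fun z hz => hw z (Finset.mem_sdiff.1 hz).1),
          Finset.erase_sdiff_comm]
    have hsub : ∀ {x}, x ∈ s.erase w → x ∈ s := fun h => Finset.mem_of_mem_erase h
    rcases gameValue_cases G b s with h | ⟨x, hx, y, hy, hxy, he⟩
    · rw [gameValue_eq_zero G b h,
        gameValue_eq_zero G b (fun x hx y hy => h x (hsub hx) y (hsub hy))]
    rcases gameValue_cases G b (s.erase w) with h' | ⟨x', hx', y', hy', hxy', he'⟩
    · obtain ⟨hx1, hy1, -⟩ := key x hx y hy hxy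
      exact absurd hxy (h' x hx1 y hy1)
    obtain ⟨hx1, hy1, e1⟩ := key x hx y hy hxy
    obtain ⟨-, -, e2⟩ := key x' (hsub hx') y' (hsub hy') hxy'
    cases b
    · have l1 := gameValue_false_le G hx1 hy1 hxy
      have l2 := gameValue_false_le G (hsub hx') (hsub hy') hxy'
      simp only [Bool.not_false] at *
      omega
    · have l1 := le_gameValue_true G hx1 hy1 hxy
      have l2 := le_gameValue_true G (hsub hx') (hsub hy') hxy'
      simp only [Bool.not_true] at *
      omega

lemma gameValue_mono_aux (n : ℕ) : ∀ (b : Bool) (t s : Finset V), s.card ≤ n → t ⊆ s →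
    gameValue G b t ≤ gameValue G b s := by
  induction n with
  | zero =>
    intro b t s hs hts
    have : s = ∅ := by simpa using hs
    subst this
    rw [Finset.subset_empty.1 hts]
  | succ n ih =>
    intro b t s hs hts
    rcases gameValue_cases G b t with h | ⟨x, hx, y, hy, hxy, he⟩
    · rw [gameValue_eq_zero G b h]; exact Nat.zero_le _
    cases b with
    | true =>
      have h1 := le_gameValue_true G (hts hx) (hts hy) hxy
      have hc := card_sdiff_pair_lt (hts hx) y
      have h2 := ih false (t \ {x, y}) (s \ {x, y}) (by omega)
        (Finset.sdiff_subset_sdiff hts (subset_refl _))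
      simp only [Bool.not_true] at he
      omega
    | false =>
      rcases gameValue_cases G false s with h | ⟨v, hv, w, hw, hvw, he'⟩
      · exact absurd hxy (h x (hts hx) y (hts hy))
      have hc := card_sdiff_pair_lt hv w
      have h2 := ih true (t \ {v, w}) (s \ {v, w}) (by omega)
        (Finset.sdiff_subset_sdiff hts (subset_refl _))
      simp only [Bool.not_false] at he he'
      suffices gameValue G false t ≤ 1 + gameValue G true (t \ {v, w}) by omega
      -- Playing any edge at a vertex `a` deletes `a` and possibly more.
      have play : ∀ u : Finset V, u.card ≤ n + 1 → ∀ a ∈ u, ∀ c ∈ u, G.Adj a c →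
          gameValue G false u ≤ 1 + gameValue G true (u.erase a) := by
        intro u hu a ha c hc hac
        have h3 := gameValue_false_le G ha hc hac
        have h4 := ih true (u \ {a, c}) (u.erase a)
          (by rw [Finset.card_erase_of_mem ha]; omega)
          (by intro z; simp; tauto)
        omega
      have htc := Finset.card_le_card hts
      have one : ∀ a : V, a ∈ t → t \ {v, w} = t.erase a →
          gameValue G false t ≤ 1 + gameValue G true (t \ {v, w}) := by
        intro a ha hEq
        rw [hEq]
        by_cases hn : ∃ c ∈ t, G.Adj a c
        · obtain ⟨c, hc, hac⟩ := hn
          exact play t (by omega) a ha c hc hac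
        · push Not at hn
          rw [gameValue_erase_isolated G _ false t a le_rfl hn]
          rcases gameValue_cases G false (t.erase a) with h | ⟨p, hp, q, hq, hpq, hpe⟩
          · rw [gameValue_eq_zero G false h]; exact Nat.zero_le _
          · have hce : (t.erase a).card ≤ n := by
              rw [Finset.card_erase_of_mem ha]; omega
            have h5 := ih true (t.erase a \ {p, q}) (t.erase a) hce Finset.sdiff_subset
            simp only [Bool.not_false] at hpe
            omega
      by_cases hvt : v ∈ t <;> by_cases hwt : w ∈ t
      · exact gameValue_false_le G hvt hwt hvw
      · exact one v hvt (by ext z; simp only [mem_sdiff, mem_insert, mem_singleton, mem_erase]; grind)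
      · exact one w hwt (by ext z; simp only [mem_sdiff, mem_insert, mem_singleton, mem_erase]; grind)
      · have hEq : t \ {v, w} = t := by
          ext z; simp only [mem_sdiff, mem_insert, mem_singleton]; grind
        have hlt : t.card ≤ n := by
          have := Finset.card_lt_card ((Finset.ssubset_iff_of_subset hts).2 ⟨v, hv, hvt⟩)
          omega
        have h5 := ih true (t \ {x, y}) t hlt Finset.sdiff_subset
        rw [hEq]
        omega

/-- Both game values are monotone under passing to a larger induced subgraph. -/
lemma gameValue_mono (b : Bool) {t s : Finset V} (h : t ⊆ s) :
    gameValue G b t ≤ gameValue G b s :=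
  gameValue_mono_aux G _ b t s le_rfl h

lemma gameValue_true_le (s : Finset V) : gameValue G true s ≤ gameValue G false s + 1 := by
  rcases gameValue_cases G true s with h | ⟨x, hx, y, hy, hxy, he⟩
  · rw [gameValue_eq_zero G true h]; exact Nat.zero_le _
  · have := gameValue_mono G false (Finset.sdiff_subset : s \ {x, y} ⊆ s)
    simp only [Bool.not_true] at he
    omega

end Game

/-! ### Min's strategy along a maximal matching -/

section Cover

variable (G : SimpleGraph V)

/-- The edges of the game position `s` are covered by the endpoints of a matching `A` lying
inside `s` together with the single vertices in `B`. -/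
structure IsMixedCover (s : Finset V) (A : Finset (Sym2 V)) (B : Finset V) : Prop where
  isMatching : IsMatchingSet G A
  mem_of_mem : ∀ e ∈ A, ∀ v ∈ e, v ∈ s
  cover : ∀ x ∈ s, ∀ y ∈ s, G.Adj x y → (x ∈ B ∨ ∃ e ∈ A, x ∈ e) ∨ (y ∈ B ∨ ∃ e ∈ A, y ∈ e)

/-- Min plays an intact matching edge. -/
lemma IsMixedCover.play {s : Finset V} {A : Finset (Sym2 V)} {B : Finset V}
    (h : IsMixedCover G s A B) {x y : V} (hA : s(x, y) ∈ A) :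
    IsMixedCover G (s \ {x, y}) (A.erase s(x, y)) B := by
  refine ⟨⟨fun e he => h.1.1 e (mem_of_mem_erase he), fun e he f hf =>
    h.1.2 e (mem_of_mem_erase he) f (mem_of_mem_erase hf)⟩, ?_, ?_⟩
  · intro e he v hv
    obtain ⟨hne, he⟩ := mem_erase.1 he
    have := h.1.2 e he _ hA hne v hv
    simp only [Sym2.mem_iff] at this
    simp [h.2 e he v hv, this]
  · intro a ha b hb hab
    simp only [mem_sdiff, mem_insert, mem_singleton] at ha hb
    have key : ∀ z, ¬ (z = x ∨ z = y) → (∃ e ∈ A, z ∈ e) → ∃ e ∈ A.erase s(x, y), z ∈ e := by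
      rintro z hz ⟨e, he, hze⟩
      refine ⟨e, mem_erase.2 ⟨?_, he⟩, hze⟩
      rintro rfl
      exact hz (Sym2.mem_iff.1 hze)
    have := h.3 a ha.1 b hb.1 hab
    have k1 := key a ha.2
    have k2 := key b hb.2
    exact this.imp (Or.imp_right k1) (Or.imp_right k2)

/-- Deleting a vertex that is not an endpoint of `A`. -/
lemma IsMixedCover.erase_vertex {s : Finset V} {A : Finset (Sym2 V)} {B : Finset V}
    (h : IsMixedCover G s A B) {x : V} (hx : ∀ e ∈ A, x ∉ e) :
    IsMixedCover G (s.erase x) A (B.erase x) := by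
  refine ⟨h.1, ?_, ?_⟩
  · intro e he v hv
    refine mem_erase.2 ⟨?_, h.2 e he v hv⟩
    rintro rfl
    exact hx e he hv
  · intro a ha b hb hab
    rw [mem_erase] at ha hb
    have := h.3 a ha.2 b hb.2 hab
    simp only [mem_erase]
    exact this.imp (Or.imp_left fun h => ⟨ha.1, h⟩) (Or.imp_left fun h => ⟨hb.1, h⟩)

/-- Deleting an endpoint `x` of the edge `xz` of `A` turns `z` into a single covering vertex. -/
lemma IsMixedCover.erase_endpoint {s : Finset V} {A : Finset (Sym2 V)} {B : Finset V}
    (h : IsMixedCover G s A B) {x z : V} (hA : s(x, z) ∈ A) :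
    IsMixedCover G (s.erase x) (A.erase s(x, z)) (insert z B) := by
  refine ⟨(h.play G hA).1, ?_, ?_⟩
  · intro e he v hv
    have := (h.play G hA).2 e he v hv
    simp only [mem_sdiff, mem_insert, mem_singleton, not_or] at this
    exact mem_erase.2 ⟨this.2.1, this.1⟩
  · intro a ha b hb hab
    rw [mem_erase] at ha hb
    have key : ∀ c, c ≠ x → (∃ e ∈ A, c ∈ e) → c = z ∨ ∃ e ∈ A.erase s(x, z), c ∈ e := by
      rintro c hc ⟨e, he, hce⟩
      by_cases heq : e = s(x, z)
      · subst heq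
        exact Or.inl ((Sym2.mem_iff.1 hce).resolve_left hc)
      · exact Or.inr ⟨e, mem_erase.2 ⟨heq, he⟩, hce⟩
    have := h.3 a ha.2 b hb.2 hab
    have k1 := key a ha.1
    have k2 := key b hb.1
    simp only [mem_insert]
    exact this.imp (fun h => h.elim (fun h => .inl (.inr h)) fun h => (k1 h).imp_left .inl)
      (fun h => h.elim (fun h => .inl (.inr h)) fun h => (k2 h).imp_left .inl)

variable [DecidableRel G.Adj]

/-- A mixed cover by `A` and `B` charges `3` per edge of `A` and `2` per vertex of `B` against
twice the number of moves. Min's reply with an edge of `A` pays for the extra `1` that Max gains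
by breaking another one. -/
lemma gameValue_le_of_cover (n : ℕ) : ∀ (s : Finset V) (A : Finset (Sym2 V)) (B : Finset V),
    s.card ≤ n → IsMixedCover G s A B →
    2 * gameValue G false s ≤ 3 * A.card + 2 * B.card ∧
      2 * gameValue G true s ≤ 3 * A.card + 2 * B.card + 1 := by
  induction n with
  | zero =>
    intro s A B hs _
    have : s = ∅ := by simpa using hs
    subst this
    rw [gameValue_eq_zero G false (by simp), gameValue_eq_zero G true (by simp)]
    omega
  | succ n ih =>
    intro s A B hs hc
    -- Effect on the potential of deleting one covering vertex from `s`.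
    have step : ∀ x ∈ s, (x ∈ B ∨ ∃ e ∈ A, x ∈ e) →
        2 * (1 + gameValue G false (s.erase x)) ≤ 3 * A.card + 2 * B.card + 1 ∧
        (A = ∅ → 2 * (1 + gameValue G true (s.erase x)) ≤ 2 * B.card + 1) := by
      intro x hx hcov
      have hcard : (s.erase x).card ≤ n := by rw [card_erase_of_mem hx]; omega
      by_cases hA : ∃ e ∈ A, x ∈ e
      · obtain ⟨e, he, hxe⟩ := hA
        obtain ⟨z, rfl⟩ := Sym2.mem_iff_exists.1 hxe
        have h1 := (ih _ _ _ hcard (hc.erase_endpoint G he)).1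
        have h2 := card_erase_add_one he
        have h3 := card_insert_le z B
        refine ⟨by omega, ?_⟩
        rintro rfl
        simp at he
      · have hB := hcov.resolve_right hA
        push Not at hA
        have h1 := ih _ _ _ hcard (hc.erase_vertex G hA)
        have h2 := card_erase_add_one hB
        refine ⟨by omega, ?_⟩
        rintro rfl
        simp only [card_empty] at h1
        omega
    have step' : ∀ x ∈ s, ∀ y ∈ s, G.Adj x y →
        2 * (1 + gameValue G false (s \ {x, y})) ≤ 3 * A.card + 2 * B.card + 1 ∧
        (A = ∅ → 2 * (1 + gameValue G true (s \ {x, y})) ≤ 2 * B.card + 1) := by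
      intro x hx y hy hxy
      have hsub : ∀ z, z = x ∨ z = y → s \ {x, y} ⊆ s.erase z := by
        intro z hz a
        simp only [mem_sdiff, mem_insert, mem_singleton, mem_erase]
        grind
      have go : ∀ z ∈ s, (z = x ∨ z = y) → (z ∈ B ∨ ∃ e ∈ A, z ∈ e) →
          2 * (1 + gameValue G false (s \ {x, y})) ≤ 3 * A.card + 2 * B.card + 1 ∧
          (A = ∅ → 2 * (1 + gameValue G true (s \ {x, y})) ≤ 2 * B.card + 1) := by
        intro z hz hzxy hzc
        have h1 := gameValue_mono G false (hsub z hzxy)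
        have h2 := gameValue_mono G true (hsub z hzxy)
        obtain ⟨h3, h4⟩ := step z hz hzc
        exact ⟨by omega, fun hA => by have := h4 hA; omega⟩
      rcases hc.3 x hx y hy hxy with h | h
      · exact go x hx (Or.inl rfl) h
      · exact go y hy (Or.inr rfl) h
    constructor
    · rcases A.eq_empty_or_nonempty with rfl | ⟨e, he⟩
      · rcases gameValue_cases G false s with h | ⟨x, hx, y, hy, hxy, hv⟩
        · rw [gameValue_eq_zero G false h]; omega
        · have := (step' x hx y hy hxy).2 rfl
          simp only [Bool.not_false] at hv
          simp only [card_empty]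
          -- The bound is `2 * m s ≤ 2 * |B| + 1`, so parity removes the extra `1`.
          omega
      · induction e with
        | _ x y =>
          have hx := hc.2 _ he x (Sym2.mem_mk_left x y)
          have hy := hc.2 _ he y (Sym2.mem_mk_right x y)
          have h1 := gameValue_false_le G hx hy (by simpa using hc.1.1 _ he)
          have hlt := card_sdiff_pair_lt hx y
          have h2 := (ih _ _ _ (by omega) (hc.play G he)).2
          have h3 := card_erase_add_one he
          omega
    · rcases gameValue_cases G true s with h | ⟨x, hx, y, hy, hxy, hv⟩
      · rw [gameValue_eq_zero G true h]; omega
      · have := (step' x hx y hy hxy).1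
        simp only [Bool.not_true] at hv
        omega

end Cover

lemma IsMaximalMatchingSet.isMixedCover [Fintype V] {G : SimpleGraph V} {M : Finset (Sym2 V)}
    (h : IsMaximalMatchingSet G M) : IsMixedCover G Finset.univ M ∅ := by
  refine ⟨h.1, fun _ _ _ _ => mem_univ _, ?_⟩
  intro x _ y _ hxy
  by_contra hcon
  simp only [notMem_empty, false_or, not_or, not_exists, not_and] at hcon
  obtain ⟨hx, hy⟩ := hcon
  have hdisj : ∀ f ∈ M, ∀ v, v ∈ s(x, y) → v ∉ f := by
    intro f hf v hv
    rcases Sym2.mem_iff.1 hv with rfl | rfl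
    · exact hx f hf
    · exact hy f hf
  refine h.2 s(x, y) (by simpa using hxy) (fun hm => hx _ hm (Sym2.mem_mk_left x y)) ⟨?_, ?_⟩
  · intro e he
    rcases mem_insert.1 he with rfl | he
    · simpa using hxy
    · exact h.1.1 e he
  · intro e he f hf hne v hve hvf
    rcases mem_insert.1 he with rfl | he <;> rcases mem_insert.1 hf with rfl | hf
    · exact hne rfl
    · exact hdisj f hf v hve hvf
    · exact hdisj e he v hvf hve
    · exact h.1.2 e he f hf hne v hve hvf

/-- Consequently the infimum defining `minMaximalMatching` is attained. -/
lemma exists_isMaximalMatchingSet [Fintype V] (G : SimpleGraph V) :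
    ∃ M : Finset (Sym2 V), IsMaximalMatchingSet G M := by
  classical
  obtain ⟨M, hM, hmax⟩ := Finset.exists_max_image
    (Finset.univ.filter fun M : Finset (Sym2 V) => IsMatchingSet G M) Finset.card
    ⟨∅, mem_filter.2 ⟨mem_univ _, by simp [IsMatchingSet]⟩⟩
  refine ⟨M, (mem_filter.1 hM).2, fun e _ he hins => ?_⟩
  have := hmax (insert e M) (by simpa using hins)
  rw [card_insert_of_notMem he] at this
  omega

/-- `Max(G) - 1 ≤ Min(G)` and `Min(G) ≤ (3/2)·μ(G)`. -/
theorem stmt7 {V : Type*} [Fintype V] [DecidableEq V] (G : SimpleGraph V) :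
    gameMax G ≤ gameMin G + 1 ∧ 2 * gameMin G ≤ 3 * minMaximalMatching G := by
  let _ : DecidableRel G.Adj := Classical.decRel _
  refine ⟨gameValue_true_le G Finset.univ, ?_⟩
  obtain ⟨M₀, hM₀⟩ := exists_isMaximalMatchingSet G
  obtain ⟨M, hM, hcard⟩ := Nat.sInf_mem
    (s := {n | ∃ M : Finset (Sym2 V), IsMaximalMatchingSet G M ∧ M.card = n}) ⟨_, M₀, hM₀, rfl⟩
  have h := (gameValue_le_of_cover G _ Finset.univ M ∅ le_rfl hM.isMixedCover).1
  rw [card_empty, hcard] at h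
  exact h
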